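/- Consider the returning secretary problem with m ≥ 2 secretaries under the no-waiting rule. Conditioned on the event that the first of the 2m arrivals is an arrival of the worst (lowest-ranked) secretary, the probability that the algorithm hires the best secretary is exactly 2/3. -/

import Mathlib

/-!
Write `A_j` for the event that both arrivals of secretary `j` precede every arrival of the
secretaries `0, …, j - 1`. The algorithm wins iff no `A_j` with `j ≠ 0` occurs
(`noWaitWins_iff`), and this depends only on the relative order of the arrivals.

Let `W m` be the number of winning orders of `m` secretaries. An order of `m + 1` secretaries is
the same as an ordered pair `(a, b)` of distinct positions for the worst secretary together with
an order of the other `m` (`insertPair_bijective`). The larger order wins iff the smaller one wins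
and `{a, b} ≠ {0, 1}` (`wins_insertPair`), so that the events `A_j` are independent. Counting the
pairs `(a, b)` gives `W (m + 1) = ((2m + 2)(2m + 1) - 2) * W m`, hence
`3 * m * W m = (2m + 1)!` by induction (`three_mul_winCount`). If the worst secretary arrives
first, one of `a`, `b` is `0` and the other is one of the remaining `2m + 1` positions, `2m` of
which are harmless. The conditional probability is therefore
`4m * W m / (2 (2m + 1) * (2m)!) = 2 / 3`.
-/

/-- The position of the first arrival of secretary `j`, when the arrival order is given by
`σ : Fin (2*m) ≃ Fin m × Fin 2` (mapping each of the `2*m` arrival positions to the pair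
(secretary, copy of the arrival)). -/
def firstArrival (m : ℕ) (σ : Fin (2 * m) ≃ Fin m × Fin 2) (j : Fin m) : Fin (2 * m) :=
  min (σ.symm (j, 0)) (σ.symm (j, 1))

/-- The position of the second arrival of secretary `j`. -/
def secondArrival (m : ℕ) (σ : Fin (2 * m) ≃ Fin m × Fin 2) (j : Fin m) : Fin (2 * m) :=
  max (σ.symm (j, 0)) (σ.symm (j, 1))

/-- The no-waiting algorithm wins: secretaries are ranked by their index (index `0`, the
best secretary, is the smallest).  The algorithm hires the best secretary iff for every
secretary `j` other than the best one it is *not* the case that `j`'s second arrival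
precedes the best secretary's first arrival while `j` is the best among all secretaries
that have had an arrival up to that moment. -/
def NoWaitWins (m : ℕ) (hm : 0 < m) (σ : Fin (2 * m) ≃ Fin m × Fin 2) : Prop :=
  ∀ j : Fin m, j ≠ ⟨0, hm⟩ →
    ¬ (secondArrival m σ j < firstArrival m σ ⟨0, hm⟩ ∧
        ∀ i : Fin m, firstArrival m σ i ≤ secondArrival m σ j → j ≤ i)

/-! ### The winning condition in terms of the relative order -/

/-- The winning condition for an assignment `p` of positions to the arrivals: every secretary
`j ≠ 0` has an arrival which is preceded by an arrival of some better secretary. The positions may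
lie in any ordered type, since only their relative order matters. -/
def Wins {m : ℕ} {T : Type*} [LT T] (p : Fin m × Fin 2 → T) : Prop :=
  ∀ j : Fin m, (j : ℕ) ≠ 0 → ∃ i < j, ∃ c d, p (i, c) < p (j, d)

/-- In the definition of `NoWaitWins`, the requirement that `j`'s second arrival precede the first
arrival of the best secretary is implied by `j` being the best secretary seen so far. -/
lemma noWaitWins_iff (m : ℕ) (hm : 0 < m) (σ : Fin (2 * m) ≃ Fin m × Fin 2) :
    NoWaitWins m hm σ ↔ Wins σ.symm := by
  unfold NoWaitWins Wins
  refine forall_congr' fun j => ?_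
  have hj : j ≠ ⟨0, hm⟩ ↔ (j : ℕ) ≠ 0 := by simp [Fin.ext_iff]
  rw [hj]
  refine imp_congr_right fun hj0 => ?_
  have key : ∀ i < j, (firstArrival m σ i ≤ secondArrival m σ j ↔
      ∃ c d, σ.symm (i, c) < σ.symm (j, d)) := by
    intro i hi
    have hne : ∀ c d, σ.symm (i, c) ≠ σ.symm (j, d) := by
      intro c d h
      have := σ.symm.injective h
      simp at this
      exact hi.ne this.1
    simp only [firstArrival, secondArrival, le_max_iff, min_le_iff, (hne _ _).le_iff_lt,
      Fin.exists_fin_two]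
    tauto
  constructor
  · intro h
    by_contra hc
    push Not at hc
    have hall : ∀ i, firstArrival m σ i ≤ secondArrival m σ j → j ≤ i := by
      intro i hi
      by_contra hlt
      push Not at hlt
      obtain ⟨c, d, hcd⟩ := (key i hlt).1 hi
      exact absurd hcd (not_lt.2 (hc i hlt c d))
    refine h ⟨?_, hall⟩
    by_contra hlt
    have h0 := hall _ (not_lt.1 hlt)
    rw [Fin.le_def] at h0
    simp at h0
    omega
  · rintro ⟨i, hi, hex⟩ ⟨_, h2⟩
    exact absurd (h2 i ((key i hi).2 hex)) (not_le.2 hi)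

/-! ### Inserting a worst secretary -/

/-- The possible positions of the two arrivals of one additional secretary. -/
abbrev PosPair (m : ℕ) : Type :=
  {ab : Fin (2 * (m + 1)) × Fin (2 * (m + 1)) // ab.1 ≠ ab.2}

lemma card_compl_posPair {m : ℕ} (x : PosPair m) :
    (({x.1.1, x.1.2} : Finset (Fin (2 * (m + 1))))ᶜ).card = 2 * m := by
  rw [Finset.card_compl, Finset.card_pair x.2, Fintype.card_fin]
  omega

/-- The increasing enumeration of the positions outside a given pair. -/
def skip {m : ℕ} (x : PosPair m) : Fin (2 * m) ↪o Fin (2 * (m + 1)) :=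
  Finset.orderEmbOfFin _ (card_compl_posPair x)

lemma skip_ne {m : ℕ} (x : PosPair m) (t : Fin (2 * m)) :
    skip x t ≠ x.1.1 ∧ skip x t ≠ x.1.2 := by
  have := Finset.orderEmbOfFin_mem _ (card_compl_posPair x) t
  rw [Finset.mem_compl, Finset.mem_insert, Finset.mem_singleton, not_or] at this
  exact this

lemma exists_skip {m : ℕ} (x : PosPair m) {s : Fin (2 * (m + 1))} (h1 : s ≠ x.1.1)
    (h2 : s ≠ x.1.2) : ∃ t, skip x t = s := by
  have := Finset.range_orderEmbOfFin _ (card_compl_posPair x)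
  have hs : s ∈ Set.range (skip x) := by
    unfold skip
    rw [this]
    simp [h1, h2]
  exact hs

/-- The positions after the arrivals of an additional worst secretary are put at the places `x`
and all other arrivals keep their relative order. -/
def insertFun {m : ℕ} (x : PosPair m) (q : Fin m × Fin 2 ≃ Fin (2 * m))
    (y : Fin (m + 1) × Fin 2) : Fin (2 * (m + 1)) :=
  Fin.lastCases (motive := fun _ => Fin (2 * (m + 1))) (if y.2 = 0 then x.1.1 else x.1.2)
    (fun i => skip x (q (i, y.2))) y.1

section
variable {m : ℕ} (x : PosPair m) (q : Fin m × Fin 2 ≃ Fin (2 * m))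

@[simp] lemma insertFun_castSucc (i : Fin m) (c : Fin 2) :
    insertFun x q (i.castSucc, c) = skip x (q (i, c)) := by
  simp [insertFun]

@[simp] lemma insertFun_last_zero : insertFun x q (Fin.last m, 0) = x.1.1 := by
  simp [insertFun]

@[simp] lemma insertFun_last_one : insertFun x q (Fin.last m, 1) = x.1.2 := by
  simp [insertFun]

lemma insertFun_injective : Function.Injective (insertFun x q) := by
  rintro ⟨i, c⟩ ⟨j, d⟩ h
  have hx := x.2
  have hs := skip_ne x
  induction i using Fin.lastCases with
  | last =>
    induction j using Fin.lastCases with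
    | last =>
      fin_cases c <;> fin_cases d <;> simp at h ⊢
      · exact hx h
      · exact hx h.symm
    | cast j =>
      exfalso
      fin_cases c <;> simp at h
      · exact (hs _).1 h.symm
      · exact (hs _).2 h.symm
  | cast i =>
    induction j using Fin.lastCases with
    | last =>
      exfalso
      fin_cases d <;> simp at h
      · exact (hs _).1 h
      · exact (hs _).2 h
    | cast j =>
      simp at h
      simp [h]

/-- `insertFun` as an arrival order. -/
noncomputable def insertPair : Fin (m + 1) × Fin 2 ≃ Fin (2 * (m + 1)) :=
  Equiv.ofBijective (insertFun x q) <| by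
    rw [Fintype.bijective_iff_injective_and_card]
    exact ⟨insertFun_injective x q, by simp [mul_comm]⟩

@[simp] lemma insertPair_apply (y : Fin (m + 1) × Fin 2) :
    insertPair x q y = insertFun x q y := rfl

/-- Adding a worst secretary turns a win into a loss only if she occupies the first two
positions, and never a loss into a win. The hypothesis `0 < m` says that she is not also the best
secretary. -/
lemma wins_insertPair (hm : 0 < m) :
    Wins (insertPair x q) ↔ (2 ≤ (x.1.1 : ℕ) ∨ 2 ≤ (x.1.2 : ℕ)) ∧ Wins q := by
  have hx : (x.1.1 : ℕ) ≠ x.1.2 := fun h => x.2 (Fin.ext h)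
  have hlast : ((∃ i : Fin m, ∃ c, skip x (q (i, c)) < x.1.1 ∨ skip x (q (i, c)) < x.1.2) ↔
      (2 ≤ (x.1.1 : ℕ) ∨ 2 ≤ (x.1.2 : ℕ))) := by
    constructor
    · rintro ⟨i, c, h⟩
      obtain ⟨h1, h2⟩ := skip_ne x (q (i, c))
      rw [Fin.lt_def, Fin.lt_def] at h
      rw [Ne, Fin.ext_iff] at h1 h2
      omega
    · intro h
      -- One of the positions `0`, `1` is free and precedes an arrival of the worst secretary.
      obtain ⟨s, hs1, hs2, hs⟩ : ∃ s : Fin (2 * (m + 1)), s ≠ x.1.1 ∧ s ≠ x.1.2 ∧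
          (s < x.1.1 ∨ s < x.1.2) := by
        simp only [Ne, Fin.ext_iff, Fin.lt_def]
        by_cases h0 : (x.1.1 : ℕ) = 0 ∨ (x.1.2 : ℕ) = 0
        · refine ⟨⟨1, by omega⟩, ?_⟩
          dsimp only
          omega
        · refine ⟨⟨0, by omega⟩, ?_⟩
          dsimp only
          omega
      obtain ⟨t, rfl⟩ := exists_skip x hs1 hs2
      exact ⟨(q.symm t).1, (q.symm t).2, by simpa using hs⟩
  rw [← hlast]
  unfold Wins
  rw [Fin.forall_fin_succ', and_comm]
  refine and_congr ?_ ?_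
  · simp [Fin.exists_fin_succ', hm.ne', Fin.castSucc_lt_last]
  · refine forall_congr' fun j => ?_
    simp [Fin.exists_fin_succ', not_lt.2 (Fin.le_last _)]

end

lemma insertPair_bijective (m : ℕ) : Function.Bijective
    (fun z : PosPair m × (Fin m × Fin 2 ≃ Fin (2 * m)) => insertPair z.1 z.2) := by
  rw [Fintype.bijective_iff_injective_and_card]
  constructor
  · rintro ⟨x, q⟩ ⟨x', q'⟩ h
    have h' : ∀ y, insertFun x q y = insertFun x' q' y := fun y => DFunLike.congr_fun h y
    have h0 := h' (Fin.last m, 0)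
    have h1 := h' (Fin.last m, 1)
    simp only [insertFun_last_zero, insertFun_last_one] at h0 h1
    obtain rfl : x = x' := Subtype.ext (Prod.ext h0 h1)
    refine Prod.ext rfl (Equiv.ext ?_)
    rintro ⟨i, c⟩
    simpa using h' (i.castSucc, c)
  · have hc : Fintype.card (PosPair m) = (2 * m + 2) * (2 * m + 1) := by
      rw [Fintype.card_subtype]
      have : (Finset.univ.filter fun ab : Fin (2 * (m + 1)) × Fin (2 * (m + 1)) => ab.1 ≠ ab.2)
          = Finset.univ.offDiag := by ext; simp
      rw [this, Finset.offDiag_card, Finset.card_univ, Fintype.card_fin, ← Nat.mul_sub_one]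
      rfl
    have e1 : Fin m × Fin 2 ≃ Fin (2 * m) := Fintype.equivOfCardEq (by simp [mul_comm])
    have e2 : Fin (m + 1) × Fin 2 ≃ Fin (2 * (m + 1)) :=
      Fintype.equivOfCardEq (by simp [mul_comm])
    rw [Fintype.card_prod, hc, Fintype.card_equiv e1, Fintype.card_equiv e2]
    simp only [Fintype.card_prod, Fintype.card_fin]
    rw [show (m + 1) * 2 = m * 2 + 1 + 1 by ring, Nat.factorial_succ, Nat.factorial_succ]
    ring

/-- A class of orders of `m + 1` secretaries which is described by a condition `P` on the positions
of the worst secretary and a condition `Q` on the order of the others has product size. -/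
lemma card_insertPair (m : ℕ) (R : (Fin (m + 1) × Fin 2 ≃ Fin (2 * (m + 1))) → Prop)
    (P : Fin (2 * (m + 1)) × Fin (2 * (m + 1)) → Prop)
    (Q : (Fin m × Fin 2 ≃ Fin (2 * m)) → Prop)
    (h : ∀ x q, R (insertPair x q) ↔ P x.1 ∧ Q q) :
    Nat.card {p // R p} =
      Nat.card {ab : Fin (2 * (m + 1)) × Fin (2 * (m + 1)) // ab.1 ≠ ab.2 ∧ P ab} *
        Nat.card {q // Q q} := by
  rw [← Nat.card_prod]
  refine Nat.card_congr (((Equiv.ofBijective _ (insertPair_bijective m)).subtypeEquiv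
    (p := fun z => P z.1.1 ∧ Q z.2) fun z => (h z.1 z.2).symm).symm.trans ?_)
  refine (Equiv.subtypeProdEquivProd (p := fun x : PosPair m => P x.1) (q := Q)).trans ?_
  exact Equiv.prodCongr (Equiv.subtypeSubtypeEquivSubtypeInter _ P) (Equiv.refl _)

/-! ### Counting the positions of the worst secretary -/

lemma card_good_pairs (m : ℕ) :
    Nat.card {ab : Fin (2 * (m + 1)) × Fin (2 * (m + 1)) //
      ab.1 ≠ ab.2 ∧ (2 ≤ (ab.1 : ℕ) ∨ 2 ≤ (ab.2 : ℕ))} = 2 * m * (2 * m + 3) := by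
  rw [Nat.card_eq_fintype_card, Fintype.card_subtype]
  have : (Finset.univ.filter fun ab : Fin (2 * (m + 1)) × Fin (2 * (m + 1)) =>
      ab.1 ≠ ab.2 ∧ (2 ≤ (ab.1 : ℕ) ∨ 2 ≤ (ab.2 : ℕ))) =
      Finset.univ.offDiag \ {(⟨0, by omega⟩, ⟨1, by omega⟩), (⟨1, by omega⟩, ⟨0, by omega⟩)} := by
    ext ⟨a, b⟩
    simp only [Finset.mem_filter, Finset.mem_univ, true_and, Finset.mem_sdiff, Finset.mem_offDiag,
      Finset.mem_insert, Finset.mem_singleton, Prod.mk.injEq, Fin.ext_iff, ne_eq]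
    omega
  rw [this, Finset.card_sdiff_of_subset, Finset.offDiag_card, Finset.card_univ, Fintype.card_fin,
    Finset.card_pair, ← Nat.mul_sub_one]
  · rw [show 2 * (m + 1) - 1 = 2 * m + 1 by omega]
    refine Nat.sub_eq_of_eq_add ?_
    ring
  · simp
  · intro y hy
    simp at hy
    rcases hy with rfl | rfl <;> simp

/-- The pairs being counted consist of `0` and an element `≥ r`, in either order. -/
lemma card_zero_pairs (n r : ℕ) (hn : 0 < n) (hr : 1 ≤ r) (hrn : r ≤ n) :
    Nat.card {ab : Fin n × Fin n // ab.1 ≠ ab.2 ∧ (((ab.1 : ℕ) = 0 ∨ (ab.2 : ℕ) = 0) ∧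
      (r ≤ (ab.1 : ℕ) ∨ r ≤ (ab.2 : ℕ)))} = 2 * (n - r) := by
  rw [Nat.card_eq_fintype_card, Fintype.card_subtype]
  have hcard : (Finset.univ.filter fun a : Fin n => r ≤ (a : ℕ)).card = n - r := by
    rcases hrn.eq_or_lt with rfl | h
    · simp
    · have : (Finset.univ.filter fun a : Fin n => r ≤ (a : ℕ)) = Finset.Ici ⟨r, h⟩ := by
        ext a; simp [Fin.le_def]
      rw [this, Fin.card_Ici]
  have : (Finset.univ.filter fun ab : Fin n × Fin n =>
      ab.1 ≠ ab.2 ∧ (((ab.1 : ℕ) = 0 ∨ (ab.2 : ℕ) = 0) ∧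
      (r ≤ (ab.1 : ℕ) ∨ r ≤ (ab.2 : ℕ)))) =
      {⟨0, hn⟩} ×ˢ (Finset.univ.filter fun a : Fin n => r ≤ (a : ℕ)) ∪
      (Finset.univ.filter fun a : Fin n => r ≤ (a : ℕ)) ×ˢ {⟨0, hn⟩} := by
    ext ⟨a, b⟩
    simp only [Finset.mem_filter, Finset.mem_univ, true_and, Finset.mem_union, Finset.mem_product,
      Finset.mem_singleton, Fin.ext_iff, ne_eq]
    omega
  rw [this, Finset.card_union_of_disjoint, Finset.card_product, Finset.card_product, hcard]
  · simp; ring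
  · rw [Finset.disjoint_left]
    rintro ⟨a, b⟩
    simp [Fin.ext_iff]
    omega

/-! ### The number of winning orders -/

/-- The number of arrival orders of `m` secretaries for which the algorithm wins. -/
noncomputable def winCount (m : ℕ) : ℕ :=
  Nat.card {q : Fin m × Fin 2 ≃ Fin (2 * m) // Wins q}

lemma card_orders (m : ℕ) : Nat.card (Fin m × Fin 2 ≃ Fin (2 * m)) = (2 * m).factorial := by
  have e1 : Fin m × Fin 2 ≃ Fin (2 * m) := Fintype.equivOfCardEq (by simp [mul_comm])
  rw [Nat.card_eq_fintype_card, Fintype.card_equiv e1]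
  simp [mul_comm]

lemma winCount_succ (m : ℕ) (hm : 0 < m) :
    winCount (m + 1) = 2 * m * (2 * m + 3) * winCount m := by
  rw [← card_good_pairs]
  exact card_insertPair m (fun p => Wins p)
    (fun ab => 2 ≤ (ab.1 : ℕ) ∨ 2 ≤ (ab.2 : ℕ)) (fun q => Wins q)
    fun x q => wins_insertPair x q hm

lemma three_mul_winCount (m : ℕ) (hm : 1 ≤ m) :
    3 * m * winCount m = (2 * m + 1).factorial := by
  induction m, hm using Nat.le_induction with
  | base =>
    have h : winCount 1 = Nat.card (Fin 1 × Fin 2 ≃ Fin (2 * 1)) :=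
      Nat.card_congr (Equiv.subtypeUnivEquiv fun q j hj => absurd (show (j : ℕ) = 0 by omega) hj)
    rw [h, card_orders]
    rfl
  | succ m hm ih =>
    rw [winCount_succ m hm, show 2 * (m + 1) + 1 = (2 * m + 1) + 1 + 1 by ring,
      Nat.factorial_succ, Nat.factorial_succ, ← ih]
    ring

/-- The worst secretary arrives first iff one of her two positions is `0`. -/
lemma first_insertPair {m : ℕ} (x : PosPair m) (q : Fin m × Fin 2 ≃ Fin (2 * m))
    (h0 : 0 < 2 * (m + 1)) :
    (((insertPair x q).symm ⟨0, h0⟩).1 : ℕ) = m ↔ (x.1.1 : ℕ) = 0 ∨ (x.1.2 : ℕ) = 0 := by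
  constructor
  · intro h
    obtain ⟨⟨i, c⟩, hic⟩ : ∃ y, y = (insertPair x q).symm ⟨0, h0⟩ := ⟨_, rfl⟩
    rw [← hic] at h
    obtain rfl : i = Fin.last m := Fin.ext h
    have hz := (Equiv.eq_symm_apply _).1 hic
    rw [insertPair_apply] at hz
    fin_cases c
    · exact Or.inl (congrArg Fin.val ((insertFun_last_zero x q).symm.trans hz))
    · exact Or.inr (congrArg Fin.val ((insertFun_last_one x q).symm.trans hz))
  · rintro (h | h)
    · have : (insertPair x q).symm ⟨0, h0⟩ = (Fin.last m, 0) := by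
        rw [Equiv.symm_apply_eq]; simp [Fin.ext_iff, h]
      rw [this]; rfl
    · have : (insertPair x q).symm ⟨0, h0⟩ = (Fin.last m, 1) := by
        rw [Equiv.symm_apply_eq]; simp [Fin.ext_iff, h]
      rw [this]; rfl

/-- **Conditional winning probability given that the worst secretary arrives first.** In
the returning secretary problem with `m ≥ 2` secretaries under the no-waiting rule,
conditioned on the event that the first of the `2m` arrivals is an arrival of the worst
(lowest-ranked, i.e. index `m-1`) secretary, the probability that the algorithm hires the
best secretary is exactly `2/3`. -/
theorem cond_prob_win_given_worst_first (m : ℕ) (hm : 2 ≤ m) :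
    (Nat.card {σ : Fin (2 * m) ≃ Fin m × Fin 2 //
        ((σ ⟨0, by omega⟩).1 : ℕ) = m - 1 ∧ NoWaitWins m (by omega) σ} : ℚ) /
      (Nat.card {σ : Fin (2 * m) ≃ Fin m × Fin 2 //
        ((σ ⟨0, by omega⟩).1 : ℕ) = m - 1} : ℚ) = 2 / 3 := by
  obtain ⟨k, rfl⟩ : ∃ k, m = k + 1 := ⟨m - 1, by omega⟩
  have hk : 1 ≤ k := by omega
  have hnum : Nat.card {σ : Fin (2 * (k + 1)) ≃ Fin (k + 1) × Fin 2 //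
        ((σ ⟨0, by omega⟩).1 : ℕ) = k + 1 - 1 ∧ NoWaitWins (k + 1) (by omega) σ} =
      2 * (2 * k) * winCount k := by
    have h := card_insertPair k
      (fun p => ((p.symm ⟨0, by omega⟩).1 : ℕ) = k ∧ Wins p)
      (fun ab => ((ab.1 : ℕ) = 0 ∨ (ab.2 : ℕ) = 0) ∧ (2 ≤ (ab.1 : ℕ) ∨ 2 ≤ (ab.2 : ℕ)))
      (fun q => Wins q)
      fun x q => by rw [first_insertPair, wins_insertPair x q hk, and_assoc]
    rw [card_zero_pairs _ 2 (by omega) (by omega) (by omega)] at h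
    rw [show 2 * k = 2 * (k + 1) - 2 by omega, winCount, ← h]
    refine Nat.card_congr ((Equiv.symmEquiv _ _).subtypeEquiv fun σ => ?_)
    rw [noWaitWins_iff]
    rfl
  have hden : Nat.card {σ : Fin (2 * (k + 1)) ≃ Fin (k + 1) × Fin 2 //
        ((σ ⟨0, by omega⟩).1 : ℕ) = k + 1 - 1} = 2 * (2 * k + 1) * (2 * k).factorial := by
    have h := card_insertPair k
      (fun p => ((p.symm ⟨0, by omega⟩).1 : ℕ) = k)
      (fun ab => ((ab.1 : ℕ) = 0 ∨ (ab.2 : ℕ) = 0) ∧ (1 ≤ (ab.1 : ℕ) ∨ 1 ≤ (ab.2 : ℕ)))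
      (fun _ => True)
      fun x q => by
        have hx : (x.1.1 : ℕ) ≠ x.1.2 := fun h => x.2 (Fin.ext h)
        rw [first_insertPair, and_true]
        omega
    rw [card_zero_pairs _ 1 (by omega) (by omega) (by omega),
      Nat.card_congr (Equiv.subtypeUnivEquiv fun _ => trivial), card_orders] at h
    rw [show 2 * k + 1 = 2 * (k + 1) - 1 by omega, ← h]
    exact Nat.card_congr ((Equiv.symmEquiv _ _).subtypeEquiv fun σ => Iff.rfl)
  rw [hnum, hden]
  have hW := three_mul_winCount k hk
  rw [Nat.factorial_succ] at hW
  have hWq : (3 * k * winCount k : ℚ) = (2 * k + 1) * (2 * k).factorial := by exact_mod_cast hW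
  have hf : ((2 * k).factorial : ℚ) ≠ 0 := by exact_mod_cast (2 * k).factorial_ne_zero
  rw [div_eq_div_iff (by push_cast; positivity) (by norm_num)]
  push_cast
  linear_combination 4 * hWq
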